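/- Let E be a homogeneous effect algebra. Every finite compatible subset of E can be embedded into a block of E, i.e. for every finite compatible M ⊆ E there is a block B of E with M ⊆ B. -/

import Mathlib

/-- An effect algebra: a partial commutative, associative operation `oplus`
(with definedness encoded via `Option`), constants `zero` and `one`,
unique orthosupplements, and `a ⊕ 1` defined only for `a = 0`. -/
structure EffectAlgebra (E : Type*) where
  oplus : E → E → Option E
  zero : E
  one : E
  comm : ∀ a b, oplus a b = oplus b a
  assoc : ∀ a b c ab abc, oplus a b = some ab → oplus ab c = some abc →
    ∃ bc, oplus b c = some bc ∧ oplus a bc = some abc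
  compl_exists : ∀ a, ∃ b, oplus a b = some one
  compl_unique : ∀ a b c, oplus a b = some one → oplus a c = some one → b = c
  add_one : ∀ a b, oplus a one = some b → a = zero

namespace EffectAlgebra

variable {E : Type*} (A : EffectAlgebra E)

/-- `a ⊥ b` : the sum `a ⊕ b` is defined. -/
def Perp (a b : E) : Prop := (A.oplus a b).isSome

/-- `a ≤ b` iff `b = a ⊕ c` for some `c`. -/
def le (a b : E) : Prop := ∃ c, A.oplus a c = some b

/-- The orthosupplement `a'`: the unique `b` with `a ⊕ b = 1`. -/
noncomputable def compl (a : E) : E :=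
  @Classical.epsilon E ⟨A.zero⟩ fun b => A.oplus a b = some A.one

/-- `a ⊖ b` : the unique `c` with `b ⊕ c = a` (defined when `b ≤ a`). -/
noncomputable def ominus (a b : E) : E :=
  @Classical.epsilon E ⟨A.zero⟩ fun c => A.oplus b c = some a

/-- Homogeneity. -/
def Homogeneous : Prop :=
  ∀ u v₁ v₂ s, A.oplus v₁ v₂ = some s → A.le u s → A.le u (A.compl s) →
    ∃ u₁ u₂, A.le u₁ v₁ ∧ A.le u₂ v₂ ∧ A.oplus u₁ u₂ = some u

/-- Riesz decomposition property. -/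
def RDP : Prop :=
  ∀ u v₁ v₂ s, A.oplus v₁ v₂ = some s → A.le u s →
    ∃ u₁ u₂, A.le u₁ v₁ ∧ A.le u₂ v₂ ∧ A.oplus u₁ u₂ = some u

/-- The sum `c₁ ⊕ … ⊕ cₙ` of a finite family (a list); `some s` iff the family
is orthogonal with sum `s`. -/
def sumList : List E → Option E
  | [] => some A.zero
  | x :: xs => (sumList xs).bind fun s => A.oplus x s

/-- The subfamily of `C` indexed by a set of indices `S ⊆ {1,…,n}`. -/
def pickList (C : List E) (S : Finset (Fin C.length)) : List E :=
  (S.sort (· ≤ ·)).map C.get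

/-- `C` is an orthogonal cover of `M`. -/
def IsCoverOf (C : List E) (M : Set E) : Prop :=
  (A.sumList C).isSome ∧
    ∀ a ∈ M, ∃ S : Finset (Fin C.length), A.sumList (pickList C S) = some a

/-- `M` is compatible with covers in `X`: every finite subset of `M` has an
orthogonal cover with range contained in `X`. -/
def CompatWithCoversIn (M X : Set E) : Prop :=
  ∀ F : Finset E, ↑F ⊆ M →
    ∃ C : List E, (∀ c ∈ C, c ∈ X) ∧ A.IsCoverOf C ↑F

/-- `M` is compatible (with covers in `E`). -/
def Compatible (M : Set E) : Prop := A.CompatWithCoversIn M Set.univ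

/-- `M` is internally compatible. -/
def InternallyCompatible (M : Set E) : Prop := A.CompatWithCoversIn M M

/-- `D` is a refinement of `C`: a partition `{P i}` of the index set of `D`
with `C i = ⊕_{j ∈ P i} D j`. -/
def IsRefinement (D C : List E) : Prop :=
  ∃ P : Fin C.length → Finset (Fin D.length),
    (∀ i j, i ≠ j → Disjoint (P i) (P j)) ∧
    (∀ k, ∃ i, k ∈ P i) ∧
    (∀ i, A.sumList (pickList D (P i)) = some (C.get i))

/-- One step of the closure construction `M ↦ M₁`. -/
def closureStep (M : Set E) : Set E :=
  {x | ∃ y ∈ M, A.le x y ∧ A.le x (A.compl y)} ∪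
  {z | ∃ y ∈ M, ∃ x, A.le x y ∧ A.le x (A.compl y) ∧ A.oplus x z = some y}

/-- The sets `Mₙ`. -/
def closureSeq (M : Set E) (n : ℕ) : Set E := (A.closureStep)^[n] M

/-- The closure `M̄ = ⋃ₙ Mₙ`. -/
def closure (M : Set E) : Set E := ⋃ n, A.closureSeq M n

/-- `B` is a sub-effect algebra of `E`. -/
def IsSubEA (B : Set E) : Prop :=
  A.one ∈ B ∧ ∀ a ∈ B, ∀ b ∈ B, A.le b a → A.ominus a b ∈ B

/-- The Riesz decomposition property for (the effect algebra on) a subset `B`. -/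
def RDPOn (B : Set E) : Prop :=
  ∀ u v₁ v₂ s, u ∈ B → v₁ ∈ B → v₂ ∈ B → A.oplus v₁ v₂ = some s → A.le u s →
    ∃ u₁ u₂, u₁ ∈ B ∧ u₂ ∈ B ∧ A.le u₁ v₁ ∧ A.le u₂ v₂ ∧ A.oplus u₁ u₂ = some u

/-- Homogeneity for (the effect algebra on) a subset `B`. -/
def HomogeneousOn (B : Set E) : Prop :=
  ∀ u v₁ v₂ s, u ∈ B → v₁ ∈ B → v₂ ∈ B → A.oplus v₁ v₂ = some s →
    A.le u s → A.le u (A.compl s) →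
    ∃ u₁ u₂, u₁ ∈ B ∧ u₂ ∈ B ∧ A.le u₁ v₁ ∧ A.le u₂ v₂ ∧ A.oplus u₁ u₂ = some u

/-- A block: a maximal sub-effect algebra satisfying the Riesz decomposition
property. -/
def IsBlock (B : Set E) : Prop :=
  A.IsSubEA B ∧ A.RDPOn B ∧
    ∀ B', A.IsSubEA B' → A.RDPOn B' → B ⊆ B' → B' = B

/-- A block of the sub-effect algebra on `F`: a maximal sub-effect algebra of
`F` satisfying the Riesz decomposition property. -/
def IsBlockIn (F B : Set E) : Prop :=
  B ⊆ F ∧ A.IsSubEA B ∧ A.RDPOn B ∧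
    ∀ B', B' ⊆ F → A.IsSubEA B' → A.RDPOn B' → B ⊆ B' → B' = B

/-- `a` is sharp: the infimum `a ∧ a'` exists and equals `0`, i.e. every common
lower bound of `a` and `a'` is `0`. -/
def Sharp (a : E) : Prop :=
  ∀ b, A.le b a → A.le b (A.compl a) → b = A.zero

/-- `a` is sharp in the sub-effect algebra on `F`. -/
def SharpIn (F : Set E) (a : E) : Prop :=
  a ∈ F ∧ ∀ b ∈ F, A.le b a → A.le b (A.compl a) → b = A.zero

/-- `a` is principal. -/
def Principal (a : E) : Prop :=
  ∀ x y s, A.le x a → A.le y a → A.oplus x y = some s → A.le s a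

/-- `a` is principal in the sub-effect algebra on `B`. -/
def PrincipalIn (B : Set E) (a : E) : Prop :=
  a ∈ B ∧ ∀ x ∈ B, ∀ y ∈ B, ∀ s, A.le x a → A.le y a →
    A.oplus x y = some s → A.le s a

/-- `a` is central: principal, and every `b` has a unique decomposition
`b = b₁ ⊕ b₂` with `b₁ ≤ a`, `b₂ ≤ a'`. -/
def Central (a : E) : Prop :=
  A.Principal a ∧ ∀ b, ∃! p : E × E,
    A.le p.1 a ∧ A.le p.2 (A.compl a) ∧ A.oplus p.1 p.2 = some b

/-- `a` is central in the sub-effect algebra on `B`. -/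
def CentralIn (B : Set E) (a : E) : Prop :=
  A.PrincipalIn B a ∧ ∀ b ∈ B, ∃! p : E × E,
    p.1 ∈ B ∧ p.2 ∈ B ∧ A.le p.1 a ∧ A.le p.2 (A.compl a) ∧
      A.oplus p.1 p.2 = some b

/-- The center `C(E)`. -/
def center : Set E := {a | A.Central a}

/-- The compatibility center `K(E)`: the intersection of all blocks. -/
def compatCenter : Set E := {x | ∀ B, A.IsBlock B → x ∈ B}

end EffectAlgebra

/-!
Adjoining an absorbing element `⊤` for undefined sums turns an effect algebra into a commutative
monoid, in which an orthogonal cover of `M`, completed by the complement of its sum, is a multiset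
with sum `1`. Let `H` be the smallest set that contains this multiset and `1`, is closed under
differences, and contains every `x ≤ y` with `y ∈ H` and `x ⊥ y`. If `P` and `Q` are subfamilies
of an orthogonal family with `⊕ P ≤ ⊕ Q`, then `⊕ (P \ Q)` is below `⊕ (Q \ P)` and orthogonal to
it, so homogeneity splits each member of `Q \ P` in two, inside `H`, with the first halves adding up
to `⊕ (P \ Q)`. Iterating such splittings, finitely many elements of `H` become subsums of a
single multiset in `H` with sum `1`, and one more splitting yields the Riesz decomposition
property of `H`. Zorn's lemma enlarges `H` to a block.
-/

namespace EffectAlgebra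

section Subsums

theorem exists_le_map_eq_of_le_map {α β : Type*} {f : α → β} {s : Multiset α} {t : Multiset β}
    (h : t ≤ s.map f) : ∃ s' ≤ s, s'.map f = t := by
  induction s, t using Quotient.inductionOn₂ with
  | h l₁ l₂ =>
    obtain ⟨l, hperm, hsub⟩ := Multiset.coe_le.1 h
    obtain ⟨l', hl', rfl⟩ := List.sublist_map_iff.1 hsub
    exact ⟨l', Multiset.coe_le.2 hl'.subperm, Multiset.coe_eq_coe.2 hperm⟩

variable {T : Type*} [AddCommMonoid T]

/-- The sums of the subfamilies of a finite family. The inclusion `subsums s ⊆ subsums s'` serves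
as the refinement relation between families. -/
def subsums (s : Multiset T) : Set T := {x | ∃ t ≤ s, t.sum = x}

theorem subsums_add_right_mono {s s' : Multiset T} (h : subsums s ⊆ subsums s')
    (r : Multiset T) : subsums (s + r) ⊆ subsums (s' + r) := by
  classical
  rintro _ ⟨t, ht, rfl⟩
  obtain ⟨t', ht', hsum⟩ := h ⟨t - r, tsub_le_iff_right.2 ht, rfl⟩
  refine ⟨t' + t ∩ r, add_le_add ht' Multiset.inter_le_right, ?_⟩
  rw [Multiset.sum_add, hsum, ← Multiset.sum_add, Multiset.sub_add_inter]

theorem subsums_map_add_subset (p : Multiset (T × T)) :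
    subsums (p.map fun q => q.1 + q.2) ⊆ subsums (p.map Prod.fst + p.map Prod.snd) := by
  rintro _ ⟨t, ht, rfl⟩
  obtain ⟨p', hp', rfl⟩ := exists_le_map_eq_of_le_map ht
  refine ⟨p'.map Prod.fst + p'.map Prod.snd,
    add_le_add (Multiset.map_le_map hp') (Multiset.map_le_map hp'), ?_⟩
  rw [Multiset.sum_add, Multiset.sum_map_add]

end Subsums

variable {E : Type*} {A : EffectAlgebra E}

theorem one_oplus_zero (A : EffectAlgebra E) : A.oplus A.one A.zero = some A.one := by
  obtain ⟨b, hb⟩ := A.compl_exists A.one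
  rwa [A.add_one b A.one (A.comm b A.one ▸ hb)] at hb

/-- The totalization of an effect algebra: its elements together with an absorbing element `⊤`,
the value of every undefined sum. -/
def Total (_A : EffectAlgebra E) := Option E

namespace Total

/-- The embedding of an effect algebra into its totalization, used as a coercion. -/
@[coe] def of (a : E) : Total A := (some a : Option E)

instance : CoeTail E (Total A) := ⟨of⟩

instance : Top (Total A) := ⟨(none : Option E)⟩

instance : Add (Total A) := ⟨fun x y => Option.bind x fun a => Option.bind y (A.oplus a)⟩

instance : Zero (Total A) := ⟨of A.zero⟩

instance : One (Total A) := ⟨of A.one⟩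

theorem coe_ne_top (a : E) : (a : Total A) ≠ ⊤ := Option.some_ne_none a

theorem one_ne_top : (1 : Total A) ≠ ⊤ := coe_ne_top A.one

theorem ne_top_iff_exists {x : Total A} : x ≠ ⊤ ↔ ∃ a : E, ↑a = x :=
  Option.ne_none_iff_exists

theorem coe_add_coe_eq_coe {a b c : E} : (a + b : Total A) = c ↔ A.oplus a b = some c := Iff.rfl

theorem top_add (x : Total A) : ⊤ + x = ⊤ := rfl

theorem add_top (x : Total A) : x + ⊤ = ⊤ := by
  cases x <;> rfl

theorem left_ne_top {x y : Total A} (h : x + y ≠ ⊤) : x ≠ ⊤ := by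
  rintro rfl
  exact h (top_add y)

theorem right_ne_top {x y : Total A} (h : x + y ≠ ⊤) : y ≠ ⊤ := by
  rintro rfl
  exact h (add_top x)

protected theorem add_comm (x y : Total A) : x + y = y + x := by
  by_cases hx : x = ⊤
  · rw [hx, top_add, add_top]
  by_cases hy : y = ⊤
  · rw [hy, top_add, add_top]
  obtain ⟨a, rfl⟩ := ne_top_iff_exists.1 hx
  obtain ⟨b, rfl⟩ := ne_top_iff_exists.1 hy
  exact A.comm a b

theorem add_assoc_of_ne_top {x y z : Total A} (h : x + y + z ≠ ⊤) : x + y + z = x + (y + z) := by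
  have hxy := left_ne_top h
  obtain ⟨a, rfl⟩ := ne_top_iff_exists.1 (left_ne_top hxy)
  obtain ⟨b, rfl⟩ := ne_top_iff_exists.1 (right_ne_top hxy)
  obtain ⟨c, rfl⟩ := ne_top_iff_exists.1 (right_ne_top h)
  obtain ⟨ab, hab⟩ := ne_top_iff_exists.1 hxy
  obtain ⟨abc, habc⟩ := ne_top_iff_exists.1 h
  rw [← hab] at habc
  obtain ⟨bc, hbc, habc'⟩ := A.assoc a b c ab abc hab.symm habc.symm
  rw [← hab, ← habc, coe_add_coe_eq_coe.2 hbc]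
  exact (coe_add_coe_eq_coe.2 habc').symm

protected theorem add_assoc (x y z : Total A) : x + y + z = x + (y + z) := by
  by_cases h : x + y + z = ⊤
  · by_contra hne
    have h' : z + y + x ≠ ⊤ := by
      rw [Total.add_comm _ x, Total.add_comm z]
      exact fun htop => hne (h.trans htop.symm)
    refine hne ?_
    rw [Total.add_comm x (y + z), Total.add_comm y z, add_assoc_of_ne_top h', Total.add_comm z,
      Total.add_comm y]
  · exact add_assoc_of_ne_top h

protected theorem add_zero (x : Total A) : x + 0 = x := by
  by_cases hx : x = ⊤
  · rw [hx, top_add]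
  obtain ⟨a, rfl⟩ := ne_top_iff_exists.1 hx
  obtain ⟨a', ha'⟩ := A.compl_exists a
  have ha : A.oplus a' a = some A.one := A.comm a a' ▸ ha'
  obtain ⟨b, hb, hb'⟩ := A.assoc a' a A.zero A.one A.one ha (one_oplus_zero A)
  rwa [A.compl_unique a' b a hb' ha] at hb

instance : AddCommMonoid (Total A) where
  add_assoc := Total.add_assoc
  add_comm := Total.add_comm
  add_zero := Total.add_zero
  zero_add x := (Total.add_comm 0 x).trans (Total.add_zero x)
  nsmul := nsmulRec

theorem exists_add_eq_one {x : Total A} (h : x ≠ ⊤) : ∃ r, x + r = 1 := by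
  obtain ⟨a, rfl⟩ := ne_top_iff_exists.1 h
  obtain ⟨b, hb⟩ := A.compl_exists a
  exact ⟨b, hb⟩

theorem eq_of_add_eq_one {x y z : Total A} (hy : x + y = 1) (hz : x + z = 1) : y = z := by
  have hxy : x + y ≠ ⊤ := hy ▸ one_ne_top
  have hxz : x + z ≠ ⊤ := hz ▸ one_ne_top
  obtain ⟨a, rfl⟩ := ne_top_iff_exists.1 (left_ne_top hxy)
  obtain ⟨b, rfl⟩ := ne_top_iff_exists.1 (right_ne_top hxy)
  obtain ⟨c, rfl⟩ := ne_top_iff_exists.1 (right_ne_top hxz)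
  rw [A.compl_unique a b c hy hz]

theorem add_left_cancel_of_ne_top {x y z : Total A} (h : x + y = x + z) (hne : x + y ≠ ⊤) :
    y = z := by
  obtain ⟨r, hr⟩ := exists_add_eq_one hne
  apply eq_of_add_eq_one (x := x + r)
  · rw [add_right_comm, hr]
  · rw [add_right_comm, ← h, hr]

theorem eq_zero_of_add_eq_zero {x y : Total A} (h : x + y = 0) : x = 0 := by
  have hsum : x + 1 + y = 1 := by rw [add_right_comm, h, zero_add]
  have hne : x + 1 ≠ ⊤ := left_ne_top (hsum ▸ one_ne_top)
  obtain ⟨a, rfl⟩ := ne_top_iff_exists.1 (left_ne_top hne)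
  obtain ⟨b, hb⟩ := ne_top_iff_exists.1 hne
  rw [A.add_one a b hb.symm]
  rfl

theorem sum_ne_top_of_le {s t : Multiset (Total A)} (hst : s ≤ t) (ht : t.sum ≠ ⊤) :
    s.sum ≠ ⊤ := by
  obtain ⟨r, rfl⟩ := Multiset.le_iff_exists_add.1 hst
  rw [Multiset.sum_add] at ht
  exact left_ne_top ht

theorem coe_add_coe_compl (a : E) : (a + A.compl a : Total A) = 1 :=
  @Classical.epsilon_spec E (fun b => A.oplus a b = some A.one) (A.compl_exists a)

theorem coe_add_coe_ominus {a b : E} (h : A.le b a) : (b + A.ominus a b : Total A) = a :=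
  @Classical.epsilon_spec E (fun c => A.oplus b c = some a) h

theorem le_iff_exists_coe_add {a b : E} : A.le a b ↔ ∃ r : Total A, a + r = b := by
  refine ⟨fun ⟨c, hc⟩ => ⟨c, hc⟩, fun ⟨r, hr⟩ => ?_⟩
  obtain ⟨c, rfl⟩ := ne_top_iff_exists.1 (right_ne_top (hr ▸ coe_ne_top b))
  exact ⟨c, hr⟩

theorem le_compl_of_add_ne_top {a b : E} (h : (a + b : Total A) ≠ ⊤) : A.le a (A.compl b) := by
  obtain ⟨r, hr⟩ := exists_add_eq_one h
  refine le_iff_exists_coe_add.2 ⟨r, eq_of_add_eq_one (x := b) ?_ (coe_add_coe_compl b)⟩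
  rw [← add_assoc, add_comm (b : Total A), hr]

theorem sumList_eq_sum (L : List E) :
    A.sumList L = ((L : Multiset E).map (of : E → Total A)).sum := by
  induction L with
  | nil => rfl
  | cons a L ih =>
    rw [← Multiset.cons_coe, Multiset.map_cons, Multiset.sum_cons, ← ih]
    rfl

theorem coe_pickList_le (L : List E) (S : Finset (Fin L.length)) :
    (pickList L S : Multiset E) ≤ L := by
  have hpick : (pickList L S : Multiset E) = S.val.map L.get := by
    rw [pickList, ← Multiset.map_coe, Finset.sort_eq]
  have hall : (L : Multiset E) = Finset.univ.val.map L.get := by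
    rw [Fin.univ_val_map, List.ofFn_get]
  rw [hpick, hall]
  exact Multiset.map_le_map (Finset.val_le_iff.2 (Finset.subset_univ S))

end Total

open Total

theorem Homogeneous.exists_decomposition (hH : A.Homogeneous) {u t v₁ v₂ : Total A}
    (h : u + t = v₁ + v₂) (hne : u + (v₁ + v₂) ≠ ⊤) :
    ∃ u₁ w₁ u₂ w₂, u₁ + w₁ = v₁ ∧ u₂ + w₂ = v₂ ∧ u₁ + u₂ = u := by
  have hv := right_ne_top hne
  obtain ⟨u, rfl⟩ := ne_top_iff_exists.1 (left_ne_top hne)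
  obtain ⟨v₁, rfl⟩ := ne_top_iff_exists.1 (left_ne_top hv)
  obtain ⟨v₂, rfl⟩ := ne_top_iff_exists.1 (right_ne_top hv)
  obtain ⟨s, hs⟩ := ne_top_iff_exists.1 hv
  rw [← hs] at h hne
  obtain ⟨u₁, u₂, ⟨w₁, h₁⟩, ⟨w₂, h₂⟩, hu⟩ := hH u v₁ v₂ s hs.symm
    (le_iff_exists_coe_add.2 ⟨t, h⟩) (le_compl_of_add_ne_top hne)
  exact ⟨u₁, w₁, u₂, w₂, h₁, h₂, hu⟩

theorem Homogeneous.exists_multiset_decomposition (hH : A.Homogeneous) {u t : Total A}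
    {s : Multiset (Total A)} (h : u + t = s.sum) (hne : u + s.sum ≠ ⊤) :
    ∃ p : Multiset (Total A × Total A),
      p.map (fun q => q.1 + q.2) = s ∧ (p.map Prod.fst).sum = u := by
  induction s using Multiset.induction_on generalizing u t with
  | empty => exact ⟨0, rfl, (eq_zero_of_add_eq_zero h).symm⟩
  | cons a s ih =>
    rw [Multiset.sum_cons] at h hne
    obtain ⟨u₁, w₁, u₂, w₂, h₁, h₂, rfl⟩ := hH.exists_decomposition h hne
    rw [add_add_add_comm] at hne
    obtain ⟨p, rfl, rfl⟩ := ih h₂ (right_ne_top hne)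
    exact ⟨(u₁, w₁) ::ₘ p, by rw [Multiset.map_cons, h₁], by rw [Multiset.map_cons,
      Multiset.sum_cons]⟩

/-- The smallest set that contains `C` and `1`, is closed under differences and contains, with
`x + z`, every summand `x` orthogonal to `x + z`. It is taken in the totalization, with the last
two closure conditions restricted to defined sums. -/
inductive hull (C : Set (Total A)) : Set (Total A)
  | one_mem : hull C 1
  | subset {c} : c ∈ C → hull C c
  | left_mem {x z} : hull C (x + z) → x + (x + z) ≠ ⊤ → hull C x
  | sub_mem {b c} : hull C (b + c) → hull C b → b + c ≠ ⊤ → hull C c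

section Hull

variable {C : Set (Total A)}

theorem hull.zero_mem : 0 ∈ hull C := by
  have h : (1 : Total A) + 0 = 1 := add_zero 1
  exact hull.sub_mem (h.symm ▸ hull.one_mem) hull.one_mem (h.symm ▸ one_ne_top)

theorem hull.mem_of_add_eq_one {x y : Total A} (hx : x ∈ hull C) (h : x + y = 1) :
    y ∈ hull C :=
  hull.sub_mem (h.symm ▸ hull.one_mem) hx (h.symm ▸ one_ne_top)

theorem hull.add_mem {a b : Total A} (ha : a ∈ hull C) (hb : b ∈ hull C) (h : a + b ≠ ⊤) :
    a + b ∈ hull C := by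
  obtain ⟨r, hr⟩ := exists_add_eq_one h
  have habr : a + (b + r) = 1 := by rw [← add_assoc, hr]
  have hbr : b + r ∈ hull C := hull.mem_of_add_eq_one ha habr
  have hr_mem : r ∈ hull C :=
    hull.sub_mem hbr hb (right_ne_top (x := a) (habr ▸ one_ne_top))
  exact hull.mem_of_add_eq_one hr_mem (by rw [add_comm, hr])

theorem hull.sum_mem {s : Multiset (Total A)} (hs : ∀ x ∈ s, x ∈ hull C) (h : s.sum ≠ ⊤) :
    s.sum ∈ hull C := by
  induction s using Multiset.induction_on with
  | empty => exact hull.zero_mem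
  | cons a s ih =>
    rw [Multiset.forall_mem_cons] at hs
    rw [Multiset.sum_cons] at h ⊢
    exact hull.add_mem hs.1 (ih hs.2 (right_ne_top h)) h

/-- `p` writes each member of the family `s` as a sum of two elements of `K`. -/
structure IsSplitting (K : Set (Total A)) (p : Multiset (Total A × Total A))
    (s : Multiset (Total A)) : Prop where
  map_add : p.map (fun q => q.1 + q.2) = s
  fst_mem : ∀ q ∈ p, q.1 ∈ K
  snd_mem : ∀ q ∈ p, q.2 ∈ K

theorem IsSplitting.add {K : Set (Total A)} {p p' : Multiset (Total A × Total A)}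
    {s s' : Multiset (Total A)} (h : IsSplitting K p s) (h' : IsSplitting K p' s') :
    IsSplitting K (p + p') (s + s') where
  map_add := by rw [Multiset.map_add, h.map_add, h'.map_add]
  fst_mem q hq := (Multiset.mem_add.1 hq).elim (h.fst_mem q) (h'.fst_mem q)
  snd_mem q hq := (Multiset.mem_add.1 hq).elim (h.snd_mem q) (h'.snd_mem q)

theorem IsSplitting.sum_fst_add_sum_snd {K : Set (Total A)} {p : Multiset (Total A × Total A)}
    {s : Multiset (Total A)} (h : IsSplitting K p s) :
    (p.map Prod.fst).sum + (p.map Prod.snd).sum = s.sum := by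
  rw [← h.map_add, Multiset.sum_map_add]

theorem IsSplitting.exists_eq_add {K : Set (Total A)} {p : Multiset (Total A × Total A)}
    {s t : Multiset (Total A)} (h : IsSplitting K p (s + t)) :
    ∃ p₁ p₂, p = p₁ + p₂ ∧ IsSplitting K p₁ s ∧ IsSplitting K p₂ t := by
  obtain ⟨p₁, hp₁, hmap₁⟩ := exists_le_map_eq_of_le_map
    (h.map_add.symm ▸ Multiset.le_add_right s t)
  obtain ⟨p₂, rfl⟩ := Multiset.le_iff_exists_add.1 hp₁
  have hmap₂ : p₂.map (fun q => q.1 + q.2) = t := by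
    have hmap := h.map_add
    rwa [Multiset.map_add, hmap₁, add_right_inj] at hmap
  refine ⟨p₁, p₂, rfl, ⟨hmap₁, ?_, ?_⟩, ⟨hmap₂, ?_, ?_⟩⟩ <;> intro q hq
  · exact h.fst_mem q (Multiset.mem_add.2 (.inl hq))
  · exact h.snd_mem q (Multiset.mem_add.2 (.inl hq))
  · exact h.fst_mem q (Multiset.mem_add.2 (.inr hq))
  · exact h.snd_mem q (Multiset.mem_add.2 (.inr hq))

theorem isSplitting_map_zero {s : Multiset (Total A)} (hs : ∀ x ∈ s, x ∈ hull C) :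
    IsSplitting (hull C) (s.map fun x => (x, 0)) s where
  map_add := by simp
  fst_mem := by simpa using hs
  snd_mem := by simp [hull.zero_mem]

theorem exists_isSplitting_of_add_sum_ne_top (hH : A.Homogeneous) {s : Multiset (Total A)}
    (hs : ∀ x ∈ s, x ∈ hull C) {u t : Total A} (h : u + t = s.sum) (hne : u + s.sum ≠ ⊤) :
    ∃ p, IsSplitting (hull C) p s ∧ (p.map Prod.fst).sum = u := by
  obtain ⟨p, rfl, rfl⟩ := hH.exists_multiset_decomposition h hne
  have hsum_mem : ∀ q ∈ p, q.1 + q.2 ∈ hull C := fun q hq =>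
    hs _ (Multiset.mem_map_of_mem (fun q : Total A × Total A => q.1 + q.2) hq)
  have hperp : ∀ q ∈ p, q.1 + (q.1 + q.2) ≠ ⊤ := by
    intro q hq
    obtain ⟨p', rfl⟩ := Multiset.exists_cons_of_mem hq
    simp only [Multiset.map_cons, Multiset.sum_cons] at hne
    rw [add_add_add_comm] at hne
    exact left_ne_top hne
  have hfst_mem : ∀ q ∈ p, q.1 ∈ hull C := fun q hq =>
    hull.left_mem (hsum_mem q hq) (hperp q hq)
  exact ⟨p, ⟨rfl, hfst_mem, fun q hq =>
    hull.sub_mem (hsum_mem q hq) (hfst_mem q hq) (right_ne_top (hperp q hq))⟩, rfl⟩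

theorem exists_isSplitting_of_le (hH : A.Homogeneous) {s P Q : Multiset (Total A)}
    (hs : s.sum ≠ ⊤) (hP : P ≤ s) (hQ : Q ≤ s) (hQC : ∀ x ∈ Q, x ∈ hull C) {t : Total A}
    (h : P.sum + t = Q.sum) :
    ∃ p, IsSplitting (hull C) p Q ∧ (p.map Prod.fst).sum = P.sum := by
  classical
  have hPeq : P ∩ Q + (P - Q) = P := by rw [add_comm, Multiset.sub_add_inter]
  have hQeq : P ∩ Q + (Q - P) = Q := by
    rw [add_comm, Multiset.inter_comm, Multiset.sub_add_inter]
  have hdiff : (P - Q).sum + t = (Q - P).sum := by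
    have hcommon : (P ∩ Q).sum + ((P - Q).sum + t) = (P ∩ Q).sum + (Q - P).sum := by
      rw [← add_assoc, ← Multiset.sum_add, ← Multiset.sum_add, hPeq, hQeq, h]
    refine add_left_cancel_of_ne_top hcommon ?_
    rw [hcommon, ← Multiset.sum_add, hQeq]
    exact sum_ne_top_of_le hQ hs
  have hperp : (P - Q).sum + (Q - P).sum ≠ ⊤ := by
    rw [← Multiset.sum_add]
    refine sum_ne_top_of_le (le_trans ?_ (Multiset.union_le hP hQ)) hs
    exact add_le_add_right (Multiset.sub_le_self Q P) (P - Q)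
  have hmem : ∀ x ∈ P ∩ Q + (Q - P), x ∈ hull C := hQeq.symm ▸ hQC
  obtain ⟨p, hp, hsum⟩ := exists_isSplitting_of_add_sum_ne_top hH
    (fun x hx => hmem x (Multiset.mem_add.2 (.inr hx))) hdiff hperp
  refine ⟨(P ∩ Q).map (fun x => (x, 0)) + p, ?_, ?_⟩
  · have hinter := isSplitting_map_zero fun x hx => hmem x (Multiset.mem_add.2 (.inl hx))
    simpa only [hQeq] using hinter.add hp
  · rw [Multiset.map_add, Multiset.sum_add, hsum, Multiset.map_map]
    simp only [Function.comp_def, Multiset.map_id']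
    rw [← Multiset.sum_add, hPeq]

/-- A finite family in the hull of `C` with sum `1` whose subsums include `C`: an orthogonal cover
of `C` by elements of its hull. -/
structure IsHullCover (C : Set (Total A)) (s : Multiset (Total A)) : Prop where
  mem_hull : ∀ x ∈ s, x ∈ hull C
  sum_eq_one : s.sum = 1
  subset_subsums : C ⊆ subsums s

theorem isHullCover_self {s : Multiset (Total A)} (hs : s.sum = 1) :
    IsHullCover {x | x ∈ s} s where
  mem_hull _ hx := hull.subset hx
  sum_eq_one := hs
  subset_subsums x hx := ⟨{x}, Multiset.singleton_le.2 hx, Multiset.sum_singleton x⟩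

namespace IsHullCover

theorem sum_ne_top {s : Multiset (Total A)} (hs : IsHullCover C s) : s.sum ≠ ⊤ :=
  hs.sum_eq_one ▸ one_ne_top

theorem split {p : Multiset (Total A × Total A)} {s r : Multiset (Total A)}
    (hs : IsHullCover C (s + r)) (hp : IsSplitting (hull C) p s) :
    IsHullCover C (p.map Prod.fst + p.map Prod.snd + r) ∧
      subsums (s + r) ⊆ subsums (p.map Prod.fst + p.map Prod.snd + r) := by
  have hsub : subsums (s + r) ⊆ subsums (p.map Prod.fst + p.map Prod.snd + r) :=
    subsums_add_right_mono (hp.map_add ▸ subsums_map_add_subset p) r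
  refine ⟨⟨fun x hx => ?_, ?_, hs.subset_subsums.trans hsub⟩, hsub⟩
  · simp only [Multiset.mem_add, Multiset.mem_map] at hx
    rcases hx with (⟨q, hq, rfl⟩ | ⟨q, hq, rfl⟩) | hx
    · exact hp.fst_mem q hq
    · exact hp.snd_mem q hq
    · exact hs.mem_hull x (Multiset.mem_add.2 (.inr hx))
  · rw [Multiset.sum_add, Multiset.sum_add, hp.sum_fst_add_sum_snd, ← Multiset.sum_add,
      hs.sum_eq_one]

theorem exists_split_of_mem_subsums (hH : A.Homogeneous) {s : Multiset (Total A)}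
    (hs : IsHullCover C s) {b c : Total A} (hb : b ∈ subsums s) (hbc : b + c ∈ subsums s) :
    ∃ F G R : Multiset (Total A), IsHullCover C (F + G + R) ∧
      subsums s ⊆ subsums (F + G + R) ∧ F.sum = b ∧ G.sum = c := by
  obtain ⟨P, hP, rfl⟩ := hb
  obtain ⟨Q, hQ, hsum⟩ := hbc
  obtain ⟨p, hp, hfst⟩ := exists_isSplitting_of_le hH hs.sum_ne_top hP hQ
    (fun x hx => hs.mem_hull x (Multiset.mem_of_le hQ hx)) hsum.symm
  have hQne := sum_ne_top_of_le hQ hs.sum_ne_top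
  obtain ⟨R, rfl⟩ := Multiset.le_iff_exists_add.1 hQ
  obtain ⟨hcover, hsub⟩ := hs.split hp
  refine ⟨p.map Prod.fst, p.map Prod.snd, R, hcover, hsub, hfst, ?_⟩
  have hsnd : P.sum + (p.map Prod.snd).sum = P.sum + c := by
    rw [← hfst, hp.sum_fst_add_sum_snd, hsum, hfst]
  exact add_left_cancel_of_ne_top hsnd (by rwa [hsnd, ← hsum])

theorem exists_refinement (hH : A.Homogeneous) {a : Total A} (ha : a ∈ hull C)
    {s : Multiset (Total A)} (hs : IsHullCover C s) :
    ∃ s', IsHullCover C s' ∧ subsums s ⊆ subsums s' ∧ a ∈ subsums s' := by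
  induction ha generalizing s with
  | one_mem => exact ⟨s, hs, subset_rfl, s, le_rfl, hs.sum_eq_one⟩
  | subset hc => exact ⟨s, hs, subset_rfl, hs.subset_subsums hc⟩
  | @left_mem x z _ hne ih =>
    obtain ⟨s', hs', hsub, Q, hQ, hsum⟩ := ih hs
    obtain ⟨p, hp, hfst⟩ := exists_isSplitting_of_add_sum_ne_top hH
      (fun y hy => hs'.mem_hull y (Multiset.mem_of_le hQ hy)) hsum.symm (hsum ▸ hne)
    obtain ⟨R, rfl⟩ := Multiset.le_iff_exists_add.1 hQ
    obtain ⟨hcover, hsub'⟩ := hs'.split hp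
    refine ⟨_, hcover, hsub.trans hsub', p.map Prod.fst, ?_, hfst⟩
    rw [add_assoc]
    exact Multiset.le_add_right _ _
  | @sub_mem b c _ _ _ ih_add ih_left =>
    obtain ⟨s₁, hs₁, hsub₁, hbc⟩ := ih_add hs
    obtain ⟨s₂, hs₂, hsub₂, hb⟩ := ih_left hs₁
    obtain ⟨F, G, R, hcover, hsub, -, hG⟩ := hs₂.exists_split_of_mem_subsums hH hb (hsub₂ hbc)
    refine ⟨_, hcover, hsub₁.trans (hsub₂.trans hsub), G, ?_, hG⟩
    exact (Multiset.le_add_left G F).trans (Multiset.le_add_right _ R)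

theorem exists_add_add_of_mem_hull (hH : A.Homogeneous) {s : Multiset (Total A)}
    (hs : IsHullCover C s) {u v₁ v₂ : Total A} (hu : u ∈ hull C) (hv₁ : v₁ ∈ hull C)
    (hv₂ : v₂ ∈ hull C) (hne : v₁ + v₂ ≠ ⊤) :
    ∃ F G R : Multiset (Total A), IsHullCover C (F + G + R) ∧
      u ∈ subsums (F + G + R) ∧ F.sum = v₁ ∧ G.sum = v₂ := by
  obtain ⟨s₁, hs₁, -, hu⟩ := hs.exists_refinement hH hu
  obtain ⟨s₂, hs₂, hsub₂, hv⟩ := hs₁.exists_refinement hH hv₁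
  obtain ⟨s₃, hs₃, hsub₃, hv₁₂⟩ := hs₂.exists_refinement hH (hull.add_mem hv₁ hv₂ hne)
  obtain ⟨F, G, R, hcover, hsub, hF, hG⟩ :=
    hs₃.exists_split_of_mem_subsums hH (hsub₃ hv) hv₁₂
  exact ⟨F, G, R, hcover, hsub (hsub₃ (hsub₂ hu)), hF, hG⟩

theorem exists_riesz_decomposition (hH : A.Homogeneous) {s : Multiset (Total A)}
    (hs : IsHullCover C s) {u v₁ v₂ t : Total A} (hu : u ∈ hull C) (hv₁ : v₁ ∈ hull C)
    (hv₂ : v₂ ∈ hull C) (h : u + t = v₁ + v₂) (hne : v₁ + v₂ ≠ ⊤) :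
    ∃ u₁ ∈ hull C, ∃ u₂ ∈ hull C, ∃ w₁ w₂, u₁ + w₁ = v₁ ∧ u₂ + w₂ = v₂ ∧ u₁ + u₂ = u := by
  obtain ⟨F, G, R, hcover, ⟨U, hU, rfl⟩, rfl, rfl⟩ :=
    hs.exists_add_add_of_mem_hull hH hu hv₁ hv₂ hne
  obtain ⟨p, hp, hfst⟩ := exists_isSplitting_of_le hH hcover.sum_ne_top hU
    (Multiset.le_add_right (F + G) R)
    (fun x hx => hcover.mem_hull x (Multiset.mem_add.2 (.inl hx))) (by rw [h, Multiset.sum_add])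
  obtain ⟨pF, pG, rfl, hpF, hpG⟩ := hp.exists_eq_add
  rw [Multiset.map_add, Multiset.sum_add] at hfst
  have hUne : (pF.map Prod.fst).sum + (pG.map Prod.fst).sum ≠ ⊤ := by
    rw [hfst]
    exact left_ne_top (h ▸ hne)
  exact ⟨_, hull.sum_mem (by simpa using fun a b => hpF.fst_mem (a, b)) (left_ne_top hUne),
    _, hull.sum_mem (by simpa using fun a b => hpG.fst_mem (a, b)) (right_ne_top hUne),
    _, _, hpF.sum_fst_add_sum_snd, hpG.sum_fst_add_sum_snd, hfst⟩

end IsHullCover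

theorem isSubEA_preimage_hull (C : Set (Total A)) : A.IsSubEA {a | (a : Total A) ∈ hull C} := by
  refine ⟨hull.one_mem, fun a ha b hb hba => ?_⟩
  have hsub : (b + A.ominus a b : Total A) = a := coe_add_coe_ominus hba
  exact hull.sub_mem (hsub.symm ▸ ha) hb (hsub.symm ▸ coe_ne_top a)

theorem IsHullCover.rdpOn_preimage_hull (hH : A.Homogeneous) {s : Multiset (Total A)}
    (hs : IsHullCover C s) : A.RDPOn {a | (a : Total A) ∈ hull C} := by
  intro u v₁ v₂ v hu hv₁ hv₂ hv huv
  obtain ⟨t, ht⟩ := le_iff_exists_coe_add.1 huv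
  have hv : (v₁ + v₂ : Total A) = v := hv
  obtain ⟨u₁, hu₁, u₂, hu₂, w₁, w₂, h₁, h₂, hsum⟩ :=
    hs.exists_riesz_decomposition hH hu hv₁ hv₂ (ht.trans hv.symm) (hv ▸ coe_ne_top v)
  have hne : u₁ + u₂ ≠ ⊤ := hsum ▸ coe_ne_top u
  obtain ⟨u₁, rfl⟩ := ne_top_iff_exists.1 (left_ne_top hne)
  obtain ⟨u₂, rfl⟩ := ne_top_iff_exists.1 (right_ne_top hne)
  exact ⟨u₁, u₂, hu₁, hu₂, le_iff_exists_coe_add.2 ⟨w₁, h₁⟩, le_iff_exists_coe_add.2 ⟨w₂, h₂⟩, hsum⟩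

end Hull

theorem IsCoverOf.exists_isSubEA_rdpOn (hH : A.Homogeneous) {L : List E} {M : Set E}
    (hL : A.IsCoverOf L M) : ∃ B : Set E, A.IsSubEA B ∧ A.RDPOn B ∧ M ⊆ B := by
  obtain ⟨hdefined, hcover⟩ := hL
  let s : Multiset (Total A) := (L : Multiset E).map of
  have hs : s.sum ≠ ⊤ := by
    rw [sumList_eq_sum] at hdefined
    exact Option.isSome_iff_ne_none.1 hdefined
  obtain ⟨r, hr⟩ := exists_add_eq_one hs
  have hunit : IsHullCover {x | x ∈ r ::ₘ s} (r ::ₘ s) :=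
    isHullCover_self (by rw [Multiset.sum_cons, add_comm, hr])
  refine ⟨_, isSubEA_preimage_hull _, hunit.rdpOn_preimage_hull hH, fun a ha => ?_⟩
  obtain ⟨S, hS⟩ := hcover a ha
  have hsum : ((pickList L S : Multiset E).map of).sum = (a : Total A) :=
    (sumList_eq_sum _).symm.trans hS
  have hle : (pickList L S : Multiset E).map of ≤ s := Multiset.map_le_map (coe_pickList_le L S)
  change (a : Total A) ∈ hull _
  rw [← hsum]
  refine hull.sum_mem (fun x hx => hull.subset ?_) (hsum ▸ coe_ne_top a)
  exact Multiset.mem_cons_of_mem (Multiset.mem_of_le hle hx)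

section Zorn

variable {c : Set (Set E)}

theorem isSubEA_sUnion_of_directedOn (hne : c.Nonempty) (hdir : DirectedOn (· ⊆ ·) c)
    (hc : ∀ B ∈ c, A.IsSubEA B) : A.IsSubEA (⋃₀ c) := by
  refine ⟨?_, ?_⟩
  · obtain ⟨B, hB⟩ := hne
    exact ⟨B, hB, (hc B hB).1⟩
  · rintro a ⟨B₁, hB₁, ha⟩ b ⟨B₂, hB₂, hb⟩ hba
    obtain ⟨B, hB, h₁, h₂⟩ := hdir B₁ hB₁ B₂ hB₂
    exact ⟨B, hB, (hc B hB).2 a (h₁ ha) b (h₂ hb) hba⟩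

theorem rdpOn_sUnion_of_directedOn (hdir : DirectedOn (· ⊆ ·) c) (hc : ∀ B ∈ c, A.RDPOn B) :
    A.RDPOn (⋃₀ c) := by
  rintro u v₁ v₂ s ⟨B₀, hB₀, hu⟩ ⟨B₁, hB₁, hv₁⟩ ⟨B₂, hB₂, hv₂⟩ hs hus
  obtain ⟨B₃, hB₃, h₀, h₁⟩ := hdir B₀ hB₀ B₁ hB₁
  obtain ⟨B, hB, h₃, h₂⟩ := hdir B₃ hB₃ B₂ hB₂
  obtain ⟨u₁, u₂, hu₁, hu₂, hdecomp⟩ :=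
    hc B hB u v₁ v₂ s (h₃ (h₀ hu)) (h₃ (h₁ hv₁)) (h₂ hv₂) hs hus
  exact ⟨u₁, u₂, ⟨B, hB, hu₁⟩, ⟨B, hB, hu₂⟩, hdecomp⟩

theorem exists_isBlock_superset {B₀ : Set E} (hsub : A.IsSubEA B₀) (hrdp : A.RDPOn B₀) :
    ∃ B, A.IsBlock B ∧ B₀ ⊆ B := by
  obtain ⟨B, hB₀, hB⟩ := zorn_subset_nonempty {B : Set E | A.IsSubEA B ∧ A.RDPOn B}
    (fun c hc hchain hne => ⟨⋃₀ c,
      ⟨isSubEA_sUnion_of_directedOn hne hchain.directedOn fun B hB => (hc hB).1,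
        rdpOn_sUnion_of_directedOn hchain.directedOn fun B hB => (hc hB).2⟩,
      fun _ => Set.subset_sUnion_of_mem⟩) B₀ ⟨hsub, hrdp⟩
  exact ⟨B, ⟨hB.prop.1, hB.prop.2, fun B' hsub' hrdp' hBB' =>
    (hB.eq_of_subset ⟨hsub', hrdp'⟩ hBB').symm⟩, hB₀⟩

end Zorn

end EffectAlgebra

/-- Every finite compatible subset of a homogeneous effect
algebra can be embedded into a block. -/
theorem finite_compatible_subset_block {E : Type*} (A : EffectAlgebra E)
    (hH : A.Homogeneous) (M : Finset E) (hM : A.Compatible ↑M) :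
    ∃ B : Set E, A.IsBlock B ∧ ↑M ⊆ B := by
  obtain ⟨L, -, hL⟩ := hM M subset_rfl
  obtain ⟨B₀, hsub, hrdp, hMB₀⟩ := hL.exists_isSubEA_rdpOn hH
  obtain ⟨B, hB, hB₀B⟩ := EffectAlgebra.exists_isBlock_superset hsub hrdp
  exact ⟨B, hB, hMB₀.trans hB₀B⟩
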